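/- arXiv:1409.7487 — 2 statements merged into one kernel-verified Lean document; each statement's English description precedes it below -/
import Mathlib

section
/- Let [a,b] ⊂ ℝ be a compact interval and let E ⊂ (a,b) be a set of Lebesgue measure zero. Suppose F is a real-valued function defined and differentiable at every point of [a,b] \ E, with derivative f there, and suppose F is basically summable (BS_δ) on E to the real number ℜ. Then the extended function f_ex (equal to f off E and to 0 on E) is generalized Riemann (Henstock–Kurzweil) integrable on [a,b], and its integral equals (F(b) − F(a)) − ℜ; equivalently, F(b) − F(a) = (HK)∫_a^b f_ex(x) dx + ℜ. -/
open scoped Classical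

/-- A tagged partition of `[a,b]`: division points `t 0 = a ≤ t 1 ≤ ⋯ ≤ t n = b`
with a tag `tag i ∈ [t i, t (i+1)]` for each subinterval. -/
structure TaggedPartition (a b : ℝ) where
  n : ℕ
  t : ℕ → ℝ
  tag : ℕ → ℝ
  t_zero : t 0 = a
  t_last : t n = b
  mono : ∀ i < n, t i ≤ t (i + 1)
  tag_mem : ∀ i < n, tag i ∈ Set.Icc (t i) (t (i + 1))

/-- A gauge on `[a,b]` is a function that is positive on `[a,b]`. -/
def IsGauge (a b : ℝ) (δ : ℝ → ℝ) : Prop :=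
  ∀ x ∈ Set.Icc a b, 0 < δ x

/-- `P` is `δ`-fine: each subinterval is contained in
`(tag i - δ (tag i), tag i + δ (tag i))`. -/
def TaggedPartition.IsFine {a b : ℝ} (P : TaggedPartition a b) (δ : ℝ → ℝ) : Prop :=
  ∀ i < P.n, Set.Icc (P.t i) (P.t (i + 1)) ⊆
    Set.Ioo (P.tag i - δ (P.tag i)) (P.tag i + δ (P.tag i))

/-- Every subinterval of `P` that intersects `E` has its tag in `E`
(membership in the family `𝒫_δ[a,b]|_E`). -/
def TaggedPartition.TagsIn {a b : ℝ} (P : TaggedPartition a b) (E : Set ℝ) : Prop :=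
  ∀ i < P.n, (Set.Icc (P.t i) (P.t (i + 1)) ∩ E).Nonempty → P.tag i ∈ E

/-- The Riemann sum `Σ g(xᵢ)(bᵢ - aᵢ)` of `g` over `P`. -/
def TaggedPartition.riemannSum {a b : ℝ} (P : TaggedPartition a b) (g : ℝ → ℝ) : ℝ :=
  ∑ i ∈ Finset.range P.n, g (P.tag i) * (P.t (i + 1) - P.t i)

/-- The sum `Σ (F(bᵢ) - F(aᵢ))` of increments of `F` over the restriction `P|_E`,
i.e. over those pairs of `P` whose interval meets `E` and whose tag lies in `E`. -/
noncomputable def TaggedPartition.restSum {a b : ℝ} (P : TaggedPartition a b) (F : ℝ → ℝ)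
    (E : Set ℝ) : ℝ :=
  ∑ i ∈ Finset.range P.n,
    if (Set.Icc (P.t i) (P.t (i + 1)) ∩ E).Nonempty ∧ P.tag i ∈ E then
      F (P.t (i + 1)) - F (P.t i)
    else 0

/-- `F` is basically summable (BS_δ) on `E` to `R`. -/
def BasicallySummable (a b : ℝ) (F : ℝ → ℝ) (E : Set ℝ) (R : ℝ) : Prop :=
  ∀ ε > 0, ∃ δ : ℝ → ℝ, IsGauge a b δ ∧
    ∀ P : TaggedPartition a b, P.IsFine δ → P.TagsIn E → |P.restSum F E - R| < ε

/-- `g` is generalized Riemann (Henstock–Kurzweil) integrable on `[a,b]` to `I`,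
using `δ`-fine partitions in `𝒫_δ[a,b]|_E`. -/
def HKIntegrableTo (a b : ℝ) (E : Set ℝ) (g : ℝ → ℝ) (I : ℝ) : Prop :=
  ∀ ε > 0, ∃ δ : ℝ → ℝ, IsGauge a b δ ∧
    ∀ P : TaggedPartition a b, P.IsFine δ → P.TagsIn E → |P.riemannSum g - I| < ε

theorem TaggedPartition.t_le_aux {a b : ℝ} (P : TaggedPartition a b) (i : ℕ) :
    ∀ k, i + k ≤ P.n → P.t i ≤ P.t (i + k) := by
  intro k
  induction k with
  | zero => intro _; exact le_refl _
  | succ k ih =>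
    intro h
    exact (ih (by omega)).trans (P.mono (i + k) (by omega))

theorem TaggedPartition.t_mem_aux {a b : ℝ} (P : TaggedPartition a b) (i : ℕ) (hi : i ≤ P.n) :
    P.t i ∈ Set.Icc a b := by
  constructor
  · have := P.t_le_aux 0 i (by omega)
    rwa [P.t_zero, Nat.zero_add] at this
  · have := P.t_le_aux i (P.n - i) (by omega)
    rwa [Nat.add_sub_cancel' hi, P.t_last] at this

/-- If `F` is differentiable with derivative `f` on `[a,b] \ E`,
where `E ⊂ (a,b)` has Lebesgue measure zero, and `F` (extended by `0` on `E`) is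
basically summable on `E` to `R`, then `f_ex` is Henstock–Kurzweil integrable on
`[a,b]` with integral `(F b - F a) - R`. -/
theorem statement0 (a b : ℝ) (hab : a ≤ b) (E : Set ℝ) (hE : E ⊆ Set.Ioo a b)
    (hE0 : MeasureTheory.volume E = 0) (F f : ℝ → ℝ)
    (hF : ∀ x ∈ Set.Icc a b \ E, HasDerivWithinAt F (f x) (Set.Icc a b) x)
    (R : ℝ)
    (hBS : BasicallySummable a b (fun x => if x ∈ E then 0 else F x) E R) :
    HKIntegrableTo a b E (fun x => if x ∈ E then 0 else f x) ((F b - F a) - R) := by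
  intro ε hε
  obtain ⟨δ₀, hδ₀, hB⟩ := hBS (ε / 2) (by positivity)
  set η : ℝ := ε / 2 / (b - a + 1) with hη
  have hba : 0 < b - a + 1 := by linarith
  have hηpos : 0 < η := by positivity
  have key : ∀ x, ∃ d > 0, x ∈ Set.Icc a b \ E → ∀ y ∈ Set.Icc a b, |y - x| < d →
      |F y - F x - (y - x) * f x| ≤ η * |y - x| := by
    intro x
    by_cases hx : x ∈ Set.Icc a b \ E
    · have h := (hasDerivWithinAt_iff_isLittleO.1 (hF x hx)).def hηpos
      obtain ⟨d, hd, h⟩ := Metric.mem_nhdsWithin_iff.1 h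
      refine ⟨d, hd, fun _ y hy hyd => ?_⟩
      have := h ⟨by rwa [Metric.mem_ball, Real.dist_eq], hy⟩
      simpa [Real.norm_eq_abs] using this
    · exact ⟨1, one_pos, fun h => absurd h hx⟩
  choose d hd key using key
  refine ⟨fun x => min (δ₀ x) (d x), fun x hx => lt_min (hδ₀ x hx) (hd x), ?_⟩
  intro P hP hT
  have h1 := hB P (fun i hi y hy => by
    have := hP i hi hy
    have h3 := min_le_left (δ₀ (P.tag i)) (d (P.tag i))
    exact ⟨by linarith [this.1], by linarith [this.2]⟩) hT
  set G : ℝ → ℝ := fun x => if x ∈ E then 0 else F x with hG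
  have haE : a ∉ E := fun h => lt_irrefl _ (hE h).1
  have hbE : b ∉ E := fun h => lt_irrefl _ (hE h).2
  have htel : ∑ i ∈ Finset.range P.n, (G (P.t (i + 1)) - G (P.t i)) = F b - F a := by
    rw [Finset.sum_range_sub (fun i => G (P.t i)), P.t_last, P.t_zero]
    simp [hG, haE, hbE]
  have htel2 : ∑ i ∈ Finset.range P.n, η * (P.t (i + 1) - P.t i) = η * (b - a) := by
    rw [← Finset.mul_sum, Finset.sum_range_sub (fun i => P.t i), P.t_last, P.t_zero]
  have hmain : |P.riemannSum (fun x => if x ∈ E then 0 else f x) - (F b - F a) + P.restSum G E|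
      ≤ η * (b - a) := by
    rw [← htel, ← htel2, TaggedPartition.riemannSum, TaggedPartition.restSum,
      ← Finset.sum_sub_distrib, ← Finset.sum_add_distrib]
    refine (Finset.abs_sum_le_sum_abs _ _).trans (Finset.sum_le_sum fun i hi => ?_)
    have hi := Finset.mem_range.1 hi
    have hm := P.mono i hi
    have ht := P.tag_mem i hi
    by_cases hE' : P.tag i ∈ E
    · have hne : (Set.Icc (P.t i) (P.t (i + 1)) ∩ E).Nonempty := ⟨_, ht, hE'⟩
      have hc : (Set.Icc (P.t i) (P.t (i + 1)) ∩ E).Nonempty ∧ P.tag i ∈ E := ⟨hne, hE'⟩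
      rw [if_pos hc]
      simp only [if_pos hE']
      rw [show (0 * (P.t (i + 1) - P.t i) - (G (P.t (i + 1)) - G (P.t i)) +
        (G (P.t (i + 1)) - G (P.t i))) = 0 by ring, abs_zero]
      exact mul_nonneg hηpos.le (by linarith)
    · have hne : ∀ y ∈ Set.Icc (P.t i) (P.t (i + 1)), y ∉ E :=
        fun y hy hyE => hE' (hT i hi ⟨y, hy, hyE⟩)
      have m1 := P.t_mem_aux i hi.le
      have m2 := P.t_mem_aux (i + 1) hi
      have hx : P.tag i ∈ Set.Icc a b \ E :=
        ⟨⟨m1.1.trans ht.1, ht.2.trans m2.2⟩, hE'⟩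
      have h3 := min_le_right (δ₀ (P.tag i)) (d (P.tag i))
      have f1 := hP i hi (Set.left_mem_Icc.2 hm)
      have f2 := hP i hi (Set.right_mem_Icc.2 hm)
      have k1 := key _ hx _ m1 (abs_lt.2 ⟨by linarith [f1.1], by linarith [f1.2]⟩)
      have k2 := key _ hx _ m2 (abs_lt.2 ⟨by linarith [f2.1], by linarith [f2.2]⟩)
      have hc : ¬ ((Set.Icc (P.t i) (P.t (i + 1)) ∩ E).Nonempty ∧ P.tag i ∈ E) :=
        fun h => hE' h.2
      rw [if_neg hc]
      simp only [if_neg hE', hG, if_neg (hne _ (Set.left_mem_Icc.2 hm)),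
        if_neg (hne _ (Set.right_mem_Icc.2 hm))]
      rw [abs_of_nonpos (sub_nonpos.2 ht.1)] at k1
      rw [abs_of_nonneg (sub_nonneg.2 ht.2)] at k2
      rw [abs_le] at k1 k2 ⊢
      constructor <;> linarith [k1.1, k1.2, k2.1, k2.2]
  have hlt : η * (b - a) < ε / 2 := by
    have : η * (b - a + 1) = ε / 2 := by rw [hη]; field_simp
    linarith
  rw [abs_lt] at h1 ⊢
  rw [abs_le] at hmain
  constructor <;> linarith [h1.1, h1.2, hmain.1, hmain.2]
end

section
/- Let [a,b] ⊂ ℝ be a compact interval and let E ⊂ (a,b) be a set of Lebesgue measure zero. Suppose F is a real-valued function defined and differentiable at every point of [a,b] \ E with derivative f there, and suppose F is basically summable (BS_δ) on E to the real number ℜ. Then for every ε > 0 there exists a gauge δ : [a,b] → (0,∞) such that for every δ-fine tagged partition P of [a,b] in which every subinterval intersecting E has its tag in E, the Riemann sum satisfies |Σ_{([u,v],x) ∈ P} f_ex(x)(v − u) − ((F(b) − F(a)) − ℜ)| < ε ((b − a) + 1). -/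
open scoped Classical

theorem TaggedPartition.le_of_le {a b : ℝ} (P : TaggedPartition a b) (i : ℕ) :
    ∀ j, i ≤ j → j ≤ P.n → P.t i ≤ P.t j := by
  intro j hij
  induction j, hij using Nat.le_induction with
  | base => intro _; exact le_rfl
  | succ k hk ih => intro h; exact (ih (by omega)).trans (P.mono k (by omega))

/-- If `F` is differentiable with derivative `f` on `[a,b] \ E`,
where `E ⊂ (a,b)` has Lebesgue measure zero, and `F_ex` is basically summable on
`E` to `R`, then for every `ε > 0` there is a gauge `δ` such that every `δ`-fine
tagged partition `P` with tags in `E` on subintervals meeting `E` satisfies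
`|Σ f_ex(xᵢ)(bᵢ - aᵢ) - ((F b - F a) - R)| < ε ((b - a) + 1)`. -/
theorem statement2 (a b : ℝ) (hab : a ≤ b) (E : Set ℝ) (hE : E ⊆ Set.Ioo a b)
    (hE0 : MeasureTheory.volume E = 0) (F f : ℝ → ℝ)
    (hF : ∀ x ∈ Set.Icc a b \ E, HasDerivWithinAt F (f x) (Set.Icc a b) x)
    (R : ℝ)
    (hBS : BasicallySummable a b (fun x => if x ∈ E then 0 else F x) E R) :
    ∀ ε > 0, ∃ δ : ℝ → ℝ, IsGauge a b δ ∧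
      ∀ P : TaggedPartition a b, P.IsFine δ → P.TagsIn E →
        |P.riemannSum (fun x => if x ∈ E then 0 else f x) - ((F b - F a) - R)| <
          ε * ((b - a) + 1) := by
  intro ε hε
  obtain ⟨δ₁, hδ₁, H₁⟩ := hBS ε hε
  have key : ∀ x, ∃ d : ℝ, 0 < d ∧ (x ∈ Set.Icc a b \ E → ∀ y ∈ Set.Icc a b, |y - x| < d →
      |F y - F x - f x * (y - x)| ≤ ε * |y - x|) := by
    intro x
    by_cases hx : x ∈ Set.Icc a b \ E
    · have h := (hasDerivWithinAt_iff_isLittleO.1 (hF x hx)).def hε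
      rw [eventually_nhdsWithin_iff, Metric.eventually_nhds_iff] at h
      obtain ⟨d, hd, h⟩ := h
      refine ⟨d, hd, fun _ y hy hyd => ?_⟩
      have := h (by rwa [Real.dist_eq]) hy
      simpa [Real.norm_eq_abs, mul_comm] using this
    · exact ⟨1, one_pos, fun h => absurd h hx⟩
  choose δ₂ hδ₂ H₂ using key
  refine ⟨fun x => min (δ₁ x) (δ₂ x), fun x hx => lt_min (hδ₁ x hx) (hδ₂ x), ?_⟩
  intro P hP hT
  have hP₁ : P.IsFine δ₁ := by
    intro i hi y hy
    have h := hP i hi hy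
    simp only [Set.mem_Ioo] at h ⊢
    have := min_le_left (δ₁ (P.tag i)) (δ₂ (P.tag i))
    constructor <;> linarith [h.1, h.2]
  have hR := H₁ P hP₁ hT
  have hmem : ∀ i ≤ P.n, P.t i ∈ Set.Icc a b := fun i hi =>
    ⟨P.t_zero.symm.le.trans (P.le_of_le 0 i (Nat.zero_le _) hi),
      (P.le_of_le i P.n hi le_rfl).trans P.t_last.le⟩
  set G : ℝ → ℝ := fun x => if x ∈ E then 0 else F x with hG
  have haE : a ∉ E := fun h => lt_irrefl _ (hE h).1
  have hbE : b ∉ E := fun h => lt_irrefl _ (hE h).2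
  have htel : ∑ i ∈ Finset.range P.n, (G (P.t (i + 1)) - G (P.t i)) = F b - F a := by
    rw [Finset.sum_range_sub (fun i => G (P.t i)), P.t_zero, P.t_last]
    simp [hG, haE, hbE]
  have hlen : ∑ i ∈ Finset.range P.n, (P.t (i + 1) - P.t i) = b - a := by
    rw [Finset.sum_range_sub P.t, P.t_zero, P.t_last]
  have hmain : |P.riemannSum (fun x => if x ∈ E then 0 else f x) - (F b - F a) + P.restSum G E|
      ≤ ε * (b - a) := by
    rw [← htel, ← hlen, Finset.mul_sum]
    unfold TaggedPartition.riemannSum TaggedPartition.restSum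
    rw [← Finset.sum_sub_distrib, ← Finset.sum_add_distrib]
    refine (Finset.abs_sum_le_sum_abs _ _).trans (Finset.sum_le_sum fun i hi => ?_)
    have hi : i < P.n := Finset.mem_range.1 hi
    have htag := P.tag_mem i hi
    have hm := P.mono i hi
    by_cases hx : P.tag i ∈ E
    · have hne : (Set.Icc (P.t i) (P.t (i + 1)) ∩ E).Nonempty := ⟨_, htag, hx⟩
      simp only [hx, hne, and_self, if_true]
      have : 0 ≤ ε * (P.t (i + 1) - P.t i) := mul_nonneg hε.le (by linarith)
      simpa using this
    · have h0 : P.t i ∉ E := fun h => hx (hT i hi ⟨_, ⟨le_rfl, hm⟩, h⟩)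
      have h1 : P.t (i + 1) ∉ E := fun h => hx (hT i hi ⟨_, ⟨hm, le_rfl⟩, h⟩)
      simp only [hG, hx, h0, h1, and_false, if_false, add_zero]
      have m0 := hmem i hi.le
      have m1 := hmem (i + 1) hi
      have mx : P.tag i ∈ Set.Icc a b \ E :=
        ⟨⟨m0.1.trans htag.1, htag.2.trans m1.2⟩, hx⟩
      have f0 := hP i hi ⟨le_rfl, hm⟩
      have f1 := hP i hi ⟨hm, le_rfl⟩
      simp only [Set.mem_Ioo] at f0 f1
      have hmin := min_le_right (δ₁ (P.tag i)) (δ₂ (P.tag i))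
      have e0 := H₂ _ mx _ m0 (by rw [abs_lt]; constructor <;> linarith [f0.1, f0.2])
      have e1 := H₂ _ mx _ m1 (by rw [abs_lt]; constructor <;> linarith [f1.1, f1.2])
      rw [abs_of_nonpos (a := P.t i - P.tag i) (by linarith [htag.1])] at e0
      rw [abs_of_nonneg (a := P.t (i + 1) - P.tag i) (by linarith [htag.2])] at e1
      rw [abs_le] at e0 e1 ⊢
      constructor <;> nlinarith [e0.1, e0.2, e1.1, e1.2]
  rw [abs_le] at hmain
  rw [abs_lt] at hR ⊢
  constructor <;> nlinarith [hmain.1, hmain.2, hR.1, hR.2]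
end
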